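/- Every instance I = (G, N, 𝒰) of connected fair division in which G = (V, E) is a tree with at least n vertices admits a maximin share allocation, i.e., a valid allocation π with u_i(π(i)) ≥ mms_i(I) for every player i ∈ N. -/

import Mathlib

/-!
Let each player call a set of items acceptable if she values it at least as much as some part of
every connected partition, and fix for her a connected partition all of whose parts are acceptable:
one attaining her maximin share. The players are served one at a time, while every unserved player
keeps at least as many parts of her own partition inside the set `W` of remaining items as there are
unserved players.

To serve someone, take an inclusion-minimal branch `D` of `W` that is acceptable to an unserved
player, where a branch is attached to the rest of `W` through a single vertex `v`, its gate. A
connected subset of `W` that meets `D` and avoids `v` cannot leave `D`, so it lies in a component of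
`D \ {v}`. In a forest `v` has at most one neighbour in this component, which is therefore a
strictly smaller branch, and by minimality acceptable to nobody left. Hence removing `D` destroys
only parts that contain `v`, at most one for each player.
-/

/-- The total utility of a set of items under an additive utility function `u`. -/
noncomputable def setVal {V : Type*} (u : V → ℚ) (X : Set V) : ℚ := ∑ᶠ x ∈ X, u x

/-- A set of items induces a connected subgraph of `G`. -/
def ConnOn {V : Type*} (G : SimpleGraph V) (X : Set V) : Prop := (G.induce X).Connected

/-- A (possibly empty) bundle is connected in `G`. -/
def PreconnOn {V : Type*} (G : SimpleGraph V) (X : Set V) : Prop := (G.induce X).Preconnected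

/-- An allocation is valid if every bundle is connected in `G` and bundles are
pairwise disjoint. -/
def ValidAlloc {V N : Type*} (G : SimpleGraph V) (π : N → Set V) : Prop :=
  (∀ i, PreconnOn G (π i)) ∧ ∀ i j, i ≠ j → Disjoint (π i) (π j)

/-- A partition of the whole vertex set into `n` nonempty parts, each inducing a
connected subgraph of `G`. -/
def IsConnPartition {V : Type*} {n : ℕ} (G : SimpleGraph V) (P : Fin n → Set V) : Prop :=
  (∀ j, (P j).Nonempty) ∧ (∀ j, ConnOn G (P j)) ∧
    (∀ j k, j ≠ k → Disjoint (P j) (P k)) ∧ (⋃ j, P j) = Set.univ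

theorem monotone_setVal {V : Type*} [Finite V] {u : V → ℚ} (hu : ∀ v, 0 ≤ u v) :
    Monotone (setVal u) := by
  intro X Y hXY
  calc setVal u X ≤ setVal u X + setVal u (Y \ X) :=
        le_add_of_nonneg_right (finsum_nonneg fun v => finsum_nonneg fun _ => hu v)
    _ = setVal u Y := finsum_mem_add_sdiff hXY Y.toFinite

theorem exists_maximin {ι β α : Type*} [Finite ι] [Nonempty ι] [LinearOrder α] (f : β → α)
    {𝒬 : Set (ι → β)} (hfin : 𝒬.Finite) (hne : 𝒬.Nonempty) :
    ∃ P ∈ 𝒬, ∀ Q ∈ 𝒬, ∃ j, ∀ a, f (Q j) ≤ f (P a) := by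
  choose argmin hmin using fun Q : ι → β => Finite.exists_min (f ∘ Q)
  obtain ⟨P, hP, hmax⟩ := Set.exists_max_image 𝒬 (fun Q => f (Q (argmin Q))) hfin hne
  exact ⟨P, hP, fun Q hQ => ⟨argmin Q, fun a => (hmax Q hQ).trans (hmin P a)⟩⟩

theorem ncard_setOf_subset_le_ncard_setOf_subset_sdiff_add_one {V ι : Type*} [Finite ι]
    {P : ι → Set V} (hdisj : Pairwise fun a b => Disjoint (P a) (P b)) {W D : Set V} {v : V}
    (hD : ∀ a, P a ⊆ W → v ∉ P a → Disjoint (P a) D) :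
    {a | P a ⊆ W}.ncard ≤ {a | P a ⊆ W \ D}.ncard + 1 := by
  have hsub : {a | P a ⊆ W} ⊆ {a | P a ⊆ W \ D} ∪ {a | v ∈ P a} := fun a ha =>
    or_iff_not_imp_right.mpr fun hva => Set.subset_sdiff.mpr ⟨ha, hD a ha hva⟩
  have hone : {a | v ∈ P a}.ncard ≤ 1 :=
    Set.ncard_le_one_iff_subsingleton.mpr fun a ha b hb => by_contra fun hab =>
      Set.disjoint_left.mp (hdisj hab) ha hb
  calc {a | P a ⊆ W}.ncard
      ≤ ({a | P a ⊆ W \ D} ∪ {a | v ∈ P a}).ncard := Set.ncard_le_ncard hsub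
    _ ≤ {a | P a ⊆ W \ D}.ncard + {a | v ∈ P a}.ncard := Set.ncard_union_le _ _
    _ ≤ {a | P a ⊆ W \ D}.ncard + 1 := by gcongr

theorem validAlloc_empty {V N : Type*} (G : SimpleGraph V) : ValidAlloc G fun _ : N => ∅ :=
  ⟨fun _ x => x.2.elim, fun _ _ _ => disjoint_bot_left⟩

theorem ValidAlloc.update {V N : Type*} [DecidableEq N] {G : SimpleGraph V} {π : N → Set V}
    (hπ : ValidAlloc G π) {D : Set V} (hD : PreconnOn G D) (hdisj : ∀ j, Disjoint (π j) D) (i : N) :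
    ValidAlloc G (Function.update π i D) := by
  refine ⟨fun j => ?_, fun j k hjk => ?_⟩
  · obtain rfl | hj := eq_or_ne j i
    · rwa [Function.update_self]
    · rw [Function.update_of_ne hj]
      exact hπ.1 j
  · obtain rfl | hj := eq_or_ne j i
    · rw [Function.update_self, Function.update_of_ne hjk.symm]
      exact (hdisj k).symm
    · rw [Function.update_of_ne hj]
      obtain rfl | hk := eq_or_ne k i
      · rw [Function.update_self]
        exact hdisj j
      · rw [Function.update_of_ne hk]
        exact hπ.2 j k hjk

section Branch

variable {V : Type*} {G : SimpleGraph V} {A C D W X : Set V} {v : V}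

theorem ConnOn.subset_of_forall_adj (hA : ConnOn G A) (hmeet : ¬ Disjoint A D)
    (hclosed : ∀ x ∈ A, x ∈ D → ∀ y ∈ A, G.Adj x y → y ∈ D) : A ⊆ D := by
  obtain ⟨x, hxA, hxD⟩ := Set.not_disjoint_iff.mp hmeet
  intro y hyA
  by_contra hyD
  obtain ⟨p⟩ := hA.preconnected ⟨x, hxA⟩ ⟨y, hyA⟩
  obtain ⟨d, -, hfst, hsnd⟩ := p.exists_boundary_dart (Subtype.val ⁻¹' D) hxD hyD
  exact hsnd (hclosed d.fst d.fst.2 hfst d.snd d.snd.2 d.adj)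

theorem ConnOn.subsingleton_inter_neighborSet (hC : ConnOn G C) (hG : G.IsAcyclic) (hv : v ∉ C) :
    (C ∩ G.neighborSet v).Subsingleton := by
  rintro a ⟨ha, hva⟩ b ⟨hb, hvb⟩
  by_contra hab
  have hbridge : G.IsBridge s(v, a) := SimpleGraph.isAcyclic_iff_forall_adj_isBridge.mp hG hva
  have hvb' : (G.deleteEdges {s(v, a)}).Adj v b :=
    SimpleGraph.deleteEdges_adj.mpr ⟨hvb, by grind⟩
  let inclusion : G.induce C →g G.deleteEdges {s(v, a)} :=
    ⟨Subtype.val, fun {x y} hxy => SimpleGraph.deleteEdges_adj.mpr ⟨hxy, by grind⟩⟩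
  have hba : (G.deleteEdges {s(v, a)}).Reachable b a :=
    (hC.preconnected ⟨b, hb⟩ ⟨a, ha⟩).map inclusion
  exact hbridge (hvb'.reachable.trans hba)

/-- `C` is (the vertex set of) a connected component of the subgraph of `G` induced by `X`. -/
def IsComponentOn (G : SimpleGraph V) (X C : Set V) : Prop :=
  Maximal (fun B => ConnOn G B ∧ B ⊆ X) C

theorem ConnOn.exists_isComponentOn (hA : ConnOn G A) (hAX : A ⊆ X) :
    ∃ C, IsComponentOn G X C ∧ A ⊆ C := by
  let 𝒮 := {B | ConnOn G B ∧ A ⊆ B ∧ B ⊆ X}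
  have hA𝒮 : A ∈ 𝒮 := ⟨hA, subset_rfl, hAX⟩
  obtain ⟨a, ha⟩ := hA.nonempty
  have hconn : ConnOn G (⋃₀ 𝒮) :=
    SimpleGraph.induce_sUnion_connected_of_pairwise_not_disjoint ⟨A, hA𝒮⟩
      (fun hs ht => ⟨a, hs.2.1 ha, ht.2.1 ha⟩) fun hs => hs.1
  have hA_sub : A ⊆ ⋃₀ 𝒮 := Set.subset_sUnion_of_mem hA𝒮
  exact ⟨⋃₀ 𝒮, ⟨⟨hconn, Set.sUnion_subset fun B hB => hB.2.2⟩, fun B hB hle =>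
    Set.subset_sUnion_of_mem ⟨hB.1, hA_sub.trans hle, hB.2⟩⟩, hA_sub⟩

theorem IsComponentOn.mem_of_adj (hC : IsComponentOn G X C) {x y : V} (hx : x ∈ C) (hy : y ∈ X)
    (hxy : G.Adj x y) : y ∈ C := by
  have hconn : ConnOn G (C ∪ {y}) :=
    SimpleGraph.connected_induce_union hC.prop.1.preconnected
      SimpleGraph.Preconnected.of_subsingleton hx rfl hxy
  exact hC.le_of_ge
    ⟨hconn, Set.union_subset hC.prop.2 (Set.singleton_subset_iff.mpr hy)⟩
    Set.subset_union_left (Or.inr rfl)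

/-- `D` is a branch of `W` with gate `v`: a connected part of `W`, attached to the rest of `W` only
through its vertex `v`. A whole component of `W` is a branch with an arbitrary gate. -/
structure IsBranch (G : SimpleGraph V) (W D : Set V) (v : V) : Prop where
  connOn : ConnOn G D
  subset : D ⊆ W
  gate_mem : v ∈ D
  eq_gate_of_adj : ∀ x ∈ D, ∀ y ∈ W, y ∉ D → G.Adj x y → x = v

theorem IsComponentOn.isBranch (hC : IsComponentOn G W C) (hv : v ∈ C) : IsBranch G W C v where
  connOn := hC.prop.1
  subset := hC.prop.2
  gate_mem := hv
  eq_gate_of_adj _ hx _ hy hyC hxy := (hyC (hC.mem_of_adj hx hy hxy)).elim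

theorem IsBranch.subset_sdiff_gate (hD : IsBranch G W D v) (hA : ConnOn G A) (hAW : A ⊆ W)
    (hmeet : ¬ Disjoint A D) (hvA : v ∉ A) : A ⊆ D \ {v} := by
  have hAD : A ⊆ D := hA.subset_of_forall_adj hmeet fun x hxA hxD y hyA hxy => by
    by_contra hyD
    exact hvA (hD.eq_gate_of_adj x hxD y (hAW hyA) hyD hxy ▸ hxA)
  exact Set.subset_sdiff_singleton hAD hvA

theorem IsBranch.exists_isBranch_of_isComponentOn (hG : G.IsAcyclic) (hD : IsBranch G W D v)
    (hC : IsComponentOn G (D \ {v}) C) : ∃ w, IsBranch G W C w := by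
  have hCD : C ⊆ D \ {v} := hC.prop.2
  have hleave : ∀ x ∈ C, ∀ y ∈ W, y ∉ C → G.Adj x y → y = v := by
    intro x hx y hy hyC hxy
    by_contra hyv
    have hyD : y ∉ D := fun hyD => hyC (hC.mem_of_adj hx ⟨hyD, hyv⟩ hxy)
    exact (hCD hx).2 (hD.eq_gate_of_adj x (hCD hx).1 y hy hyD hxy)
  have hsub : (C ∩ G.neighborSet v).Subsingleton :=
    hC.prop.1.subsingleton_inter_neighborSet hG fun hv => (hCD hv).2 rfl
  obtain ⟨w, hwC, hw⟩ : ∃ w ∈ C, ∀ x ∈ C, G.Adj v x → x = w := by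
    by_cases hnbr : (C ∩ G.neighborSet v).Nonempty
    · obtain ⟨w, hw⟩ := hnbr
      exact ⟨w, hw.1, fun x hx hvx => hsub ⟨hx, hvx⟩ hw⟩
    · obtain ⟨⟨w, hw⟩⟩ := hC.prop.1.nonempty
      exact ⟨w, hw, fun x hx hvx => (hnbr ⟨x, hx, hvx⟩).elim⟩
  refine ⟨w, hC.prop.1, hCD.trans (Set.sdiff_subset.trans hD.subset), hwC, ?_⟩
  intro x hx y hy hyC hxy
  exact hw x hx (hleave x hx y hy hyC hxy ▸ hxy.symm)

theorem IsBranch.exists_isBranch_ssubset (hG : G.IsAcyclic) (hD : IsBranch G W D v)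
    (hA : ConnOn G A) (hAW : A ⊆ W) (hmeet : ¬ Disjoint A D) (hvA : v ∉ A) :
    ∃ C w, IsBranch G W C w ∧ A ⊆ C ∧ C ⊂ D := by
  obtain ⟨C, hC, hAC⟩ := hA.exists_isComponentOn (hD.subset_sdiff_gate hA hAW hmeet hvA)
  obtain ⟨w, hw⟩ := hD.exists_isBranch_of_isComponentOn hG hC
  exact ⟨C, w, hw, hAC, hC.prop.2.trans_ssubset (Set.sdiff_singleton_ssubset.mpr hD.gate_mem)⟩

theorem exists_isBranch_forall_disjoint [Finite V] (hG : G.IsAcyclic) {F : Set (Set V)}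
    (hF : IsUpperSet F) (hA : ConnOn G A) (hAW : A ⊆ W) (hAF : A ∈ F) :
    ∃ D v, IsBranch G W D v ∧ D ∈ F ∧
      ∀ B ∈ F, ConnOn G B → B ⊆ W → v ∉ B → Disjoint B D := by
  obtain ⟨C, hC, hAC⟩ := hA.exists_isComponentOn hAW
  obtain ⟨⟨c, hc⟩⟩ := hC.prop.1.nonempty
  have hC_branch : (∃ v, IsBranch G W C v) ∧ C ∈ F := ⟨⟨c, hC.isBranch hc⟩, hF hAC hAF⟩
  obtain ⟨D, -, hD⟩ :=
    Finite.exists_le_minimal (p := fun D => (∃ v, IsBranch G W D v) ∧ D ∈ F) hC_branch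
  obtain ⟨⟨v, hDv⟩, hDF⟩ := hD.prop
  refine ⟨D, v, hDv, hDF, fun B hBF hB hBW hvB => ?_⟩
  by_contra hmeet
  obtain ⟨E, w, hE, hBE, hED⟩ := hDv.exists_isBranch_ssubset hG hB hBW hmeet hvB
  exact hD.not_prop_of_lt hED ⟨⟨w, hE⟩, hF hBE hBF⟩

end Branch

section Allocation

variable {V N : Type*} [Finite V] {G : SimpleGraph V}

theorem exists_validAlloc_of_card_le {ι : Type*} [Finite ι] (hG : G.IsAcyclic)
    {F : N → Set (Set V)} (hF : ∀ i, IsUpperSet (F i)) {P : N → ι → Set V}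
    (hPF : ∀ i a, P i a ∈ F i) (hconn : ∀ i a, ConnOn G (P i a))
    (hdisj : ∀ i, Pairwise fun a b => Disjoint (P i a) (P i b)) (S : Finset N) (W : Set V)
    (hcard : ∀ i ∈ S, S.card ≤ {a | P i a ⊆ W}.ncard) :
    ∃ π, ValidAlloc G π ∧ (∀ i, π i ⊆ W) ∧ ∀ i ∈ S, π i ∈ F i := by
  classical
  induction S using Finset.strongInduction generalizing W with
  | H S ih =>
    obtain rfl | ⟨i₀, hi₀⟩ := S.eq_empty_or_nonempty
    · exact ⟨fun _ => ∅, validAlloc_empty G, by simp, by simp⟩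
    obtain ⟨a, ha⟩ : {a | P i₀ a ⊆ W}.Nonempty :=
      Set.nonempty_of_ncard_ne_zero
        ((Finset.card_pos.mpr ⟨i₀, hi₀⟩).trans_le (hcard i₀ hi₀)).ne'
    obtain ⟨D, v, hD, hDF, hPD⟩ :=
      exists_isBranch_forall_disjoint hG (isUpperSet_iUnion₂ fun i (_ : i ∈ S) => hF i)
        (hconn i₀ a) ha (Set.mem_biUnion hi₀ (hPF i₀ a))
    obtain ⟨i, hi, hDi⟩ := Set.mem_iUnion₂.mp hDF
    have hparts : ∀ j ∈ S.erase i, (S.erase i).card ≤ {a | P j a ⊆ W \ D}.ncard := by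
      intro j hj
      have hjS := Finset.mem_of_mem_erase hj
      have hlost := ncard_setOf_subset_le_ncard_setOf_subset_sdiff_add_one (hdisj j)
        fun a => hPD (P j a) (Set.mem_biUnion hjS (hPF j a)) (hconn j a)
      have hsurviving : (S.erase i).card + 1 ≤ {a | P j a ⊆ W}.ncard :=
        (Finset.card_erase_add_one hi).trans_le (hcard j hjS)
      exact Nat.le_of_succ_le_succ (hsurviving.trans hlost)
    obtain ⟨π, hπ, hπW, hπF⟩ := ih (S.erase i) (Finset.erase_ssubset hi) (W \ D) hparts
    refine ⟨Function.update π i D,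
      hπ.update hD.connOn.preconnected (fun j => (Set.subset_sdiff.mp (hπW j)).2) i, ?_, ?_⟩
    · exact Function.forall_update_iff π (fun _ X => X ⊆ W) |>.mpr
        ⟨hD.subset, fun j _ => (hπW j).trans Set.sdiff_subset⟩
    · exact Function.forall_update_iff π (fun j X => j ∈ S → X ∈ F j) |>.mpr
        ⟨fun _ => hDi, fun j hji hj => hπF j (Finset.mem_erase.mpr ⟨hji, hj⟩)⟩

theorem mms_allocation_exists_on_tree_general {α : Type*} [Fintype N] [LinearOrder α]
    (hG : G.IsAcyclic) (f : N → Set V → α) (hf : ∀ i, Monotone (f i)) :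
    ∃ π : N → Set V, ValidAlloc G π ∧
      ∀ i : N, ∀ P : Fin (Fintype.card N) → Set V, IsConnPartition G P →
        ∃ j, f i (P j) ≤ f i (π i) := by
  by_cases hne : ∃ P : Fin (Fintype.card N) → Set V, IsConnPartition G P
  · let F (i : N) : Set (Set V) :=
      {X | ∀ Q : Fin (Fintype.card N) → Set V, IsConnPartition G Q → ∃ j, f i (Q j) ≤ f i X}
    have hF (i : N) : IsUpperSet (F i) := fun X Y hXY hX Q hQ =>
      (hX Q hQ).imp fun _ hj => hj.trans (hf i hXY)
    have hmms (i : N) : ∃ P : Fin (Fintype.card N) → Set V,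
        IsConnPartition G P ∧ ∀ a, P a ∈ F i := by
      have : Nonempty (Fin (Fintype.card N)) := ⟨Fintype.equivFin N i⟩
      obtain ⟨P, hP, hmax⟩ := exists_maximin (f i) (Set.toFinite {P | IsConnPartition G P}) hne
      exact ⟨P, hP, fun a Q hQ => (hmax Q hQ).imp fun _ hj => hj a⟩
    choose P hP hPF using hmms
    obtain ⟨π, hπ, -, hπF⟩ := exists_validAlloc_of_card_le hG hF hPF (fun i => (hP i).2.1)
      (fun i a b => (hP i).2.2.1 a b) Finset.univ Set.univ (by simp [Set.ncard_univ])
    exact ⟨π, hπ, fun i => hπF i (Finset.mem_univ i)⟩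
  · -- A forest with more components than players has no such partition.
    exact ⟨fun _ => ∅, validAlloc_empty G, fun _ P hP => (hne ⟨P, hP⟩).elim⟩

end Allocation

/-- Every CFD instance on a tree with at least `n` vertices admits a maximin share
allocation: a valid allocation `π` with `u_i(π(i)) ≥ mms_i(I)` for all `i` (here
`u_i(π(i)) ≥ mms_i(I)` is expressed as: for every partition of the items into
`n` nonempty connected parts, player `i` values her bundle at least as much as some part). -/
theorem mms_allocation_exists_on_tree {V N : Type*} [Fintype V] [Fintype N] [Nonempty N]
    (G : SimpleGraph V) (hG : G.IsTree)
    (hcard : Fintype.card N ≤ Fintype.card V)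
    (u : N → V → ℚ) (hnn : ∀ i v, 0 ≤ u i v) (hsum : ∀ i, ∑ v, u i v = 1) :
    ∃ π : N → Set V, ValidAlloc G π ∧
      ∀ i : N, ∀ P : Fin (Fintype.card N) → Set V, IsConnPartition G P →
        ∃ j, setVal (u i) (P j) ≤ setVal (u i) (π i) :=
  mms_allocation_exists_on_tree_general hG.isAcyclic (fun i => setVal (u i)) fun i =>
    monotone_setVal (hnn i)
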